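/- arXiv:1303.3122 — 3 statements merged into one kernel-verified Lean document; each statement's English description precedes it below -/
import Mathlib

section
/- For x, y > 0 with x ≠ y, the logarithmic mean L_{x,y}(t) = (x − y)/(ln(x+t) − ln(y+t)) · 1, i.e., L_{x,y}(t) = ((x+t) − (y+t))/(ln(x+t) − ln(y+t)), is a Bernstein function of t on (−min{x,y}, ∞): it is nonnegative, has derivatives of all orders, and its first derivative is completely monotonic on (−min{x,y}, ∞). -/
open Real

open Set
open scoped ContDiff ENNReal

/-! With `v t = log (x + t) - log (y + t)` for `y < x`, the derivative of the logarithmic mean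
`L (x + t) (y + t)` is `φ (v t)`, where `φ v = 2 (cosh v - 1) / v ^ 2` has a power series with
nonnegative coefficients and is thus absolutely monotone. Since `-v' = 1 / (y + t) - 1 / (x + t)`
is completely monotone, so is `v`, and Faà di Bruno's formula shows that an absolutely monotone
function of a completely monotone one is completely monotone. -/

section PowerSeries

variable {f : ℝ → ℝ} {p : FormalMultilinearSeries ℝ ℝ ℝ}

theorem coeff_changeOrigin_nonneg (hp : ∀ n, 0 ≤ p.coeff n) {x : ℝ} (hx : 0 ≤ x)
    (hxr : x ∈ Metric.eball 0 p.radius) (n : ℕ) : 0 ≤ (p.changeOrigin x).coeff n := by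
  have hsum : HasSum (fun l ↦ p.changeOriginSeries n l fun _ ↦ x) (p.changeOrigin x n) := by
    simpa only [zero_add] using
      (p.hasFPowerSeriesOnBall_changeOrigin n (pos_of_gt hxr)).hasSum hxr
  refine (ContinuousMultilinearMap.hasSum_eval hsum fun _ ↦ 1).nonneg fun l ↦ ?_
  simp only [FormalMultilinearSeries.changeOriginSeries, sum_apply]
  refine Finset.sum_nonneg fun s _ ↦ ?_
  rw [FormalMultilinearSeries.changeOriginSeriesTerm_apply,
    FormalMultilinearSeries.apply_eq_prod_smul_coeff]
  refine smul_nonneg (Finset.prod_nonneg fun i _ ↦ ?_) (hp _)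
  by_cases hi : i ∈ s.1 <;> simp [hi, hx]

theorem absolutelyMonotoneOn_of_hasFPowerSeriesOnBall {a : ℝ} {r : ℝ≥0∞}
    (hf : HasFPowerSeriesOnBall f p a r) (hp : ∀ n, 0 ≤ p.coeff n) :
    AbsolutelyMonotoneOn f (Metric.eball a r ∩ Ici a) := by
  have hunique : UniqueDiffOn ℝ (Metric.eball a r) := Metric.isOpen_eball.uniqueDiffOn
  have hsmooth : ContDiffOn ℝ ∞ f (Metric.eball a r) := hf.analyticOnNhd.contDiffOn hunique
  refine ⟨ftaylorSeriesWithin ℝ f (Metric.eball a r),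
    (hsmooth.ftaylorSeriesWithin hunique).mono inter_subset_left, fun n x ⟨hxr, hax⟩ ↦ ?_⟩
  have hxa : x - a ∈ Metric.eball (0 : ℝ) r := by simpa [edist_eq_enorm_sub] using hxr
  have hfx : HasFPowerSeriesOnBall f (p.changeOrigin (x - a)) x (r - ‖x - a‖₊) := by
    simpa only [add_sub_cancel] using hf.changeOrigin (mem_eball_zero_iff.1 hxa)
  rw [ftaylorSeriesWithin, iteratedFDerivWithin_of_isOpen n Metric.isOpen_eball hxr,
    ← hfx.factorial_smul]
  exact nsmul_nonneg (coeff_changeOrigin_nonneg hp (sub_nonneg.2 hax)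
    (Metric.eball_subset_eball hf.r_le hxa) n) _

theorem absolutelyMonotoneOn_of_hasSum_pow {a : ℕ → ℝ} {s : Set ℝ} (hs : IsOpen s)
    (hs₀ : s ⊆ Ici 0) (ha : ∀ k, 0 ≤ a k) (hf : ∀ x ∈ s, HasSum (fun k ↦ a k * x ^ k) (f x)) :
    AbsolutelyMonotoneOn f s := by
  rcases s.eq_empty_or_nonempty with rfl | ⟨x₀, hx₀⟩
  · exact AbsolutelyMonotoneOn.iff_iteratedDerivWithin_nonneg uniqueDiffOn_empty |>.2 (by simp)
  let p := FormalMultilinearSeries.ofScalars ℝ a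
  have hball : s ⊆ Metric.eball 0 p.radius := fun x hx ↦ by
    obtain ⟨y, hys, hxy⟩ : ∃ y ∈ s, x < y :=
      ((hs.eventually_mem hx).filter_mono nhdsWithin_le_nhds |>.and
        (self_mem_nhdsWithin : Ioi x ∈ nhdsWithin x (Ioi x))).exists
    have hy : ENNReal.ofReal y ≤ p.radius := by
      refine p.le_radius_of_summable ((hf y hys).summable.congr fun k ↦ ?_)
      simp [p, abs_of_nonneg (ha k), Real.coe_toNNReal y (hs₀ hys)]
    refine mem_eball_zero_iff.2 (lt_of_lt_of_le ?_ hy)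
    rw [Real.enorm_of_nonneg (hs₀ hx)]
    exact (ENNReal.ofReal_lt_ofReal_iff ((hs₀ hx).trans_lt hxy)).2 hxy
  obtain ⟨q, hq, hq₀⟩ := absolutelyMonotoneOn_of_hasFPowerSeriesOnBall
    (p.hasFPowerSeriesOnBall (pos_of_gt (hball hx₀))) (by simpa [p] using ha)
  have hsub : s ⊆ Metric.eball 0 p.radius ∩ Ici 0 := subset_inter hball hs₀
  refine ⟨q, (hq.mono hsub).congr fun x hx ↦ ?_, fun n x hx ↦ hq₀ n (hsub hx)⟩
  simpa [p, FormalMultilinearSeries.sum, mul_comm] using (hf x hx).tsum_eq.symm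

theorem hasSum_two_mul_cosh_sub_one_div_sq {v : ℝ} (hv : v ≠ 0) :
    HasSum (fun k ↦ 2 / (2 * k + 2).factorial * v ^ (2 * k)) (2 * (cosh v - 1) / v ^ 2) := by
  have htail : HasSum (fun k ↦ v ^ (2 * (k + 1)) / (2 * (k + 1)).factorial) (cosh v - 1) := by
    simpa using (hasSum_nat_add_iff' 1).2 (hasSum_cosh v)
  have hterm (k : ℕ) : 2 / (2 * k + 2).factorial * v ^ (2 * k) =
      2 * (v ^ (2 * (k + 1)) / (2 * (k + 1)).factorial) / v ^ 2 := by
    rw [mul_add_one, pow_add]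
    field_simp
  simpa only [hterm] using (htail.mul_left 2).div_const (v ^ 2)

theorem absolutelyMonotoneOn_two_mul_cosh_sub_one_div_sq :
    AbsolutelyMonotoneOn (fun v ↦ 2 * (cosh v - 1) / v ^ 2) (Ioi 0) := by
  let a : ℕ → ℝ := fun k ↦ if Even k then 2 / (k + 2).factorial else 0
  have ha : ∀ k, 0 ≤ a k := fun k ↦ by positivity
  refine absolutelyMonotoneOn_of_hasSum_pow isOpen_Ioi Ioi_subset_Ici_self ha fun v hv ↦ ?_
  have heven : HasSum (fun k ↦ a (2 * k) * v ^ (2 * k)) (2 * (cosh v - 1) / v ^ 2) := by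
    simpa only [a, even_two_mul, if_true] using hasSum_two_mul_cosh_sub_one_div_sq (ne_of_gt hv)
  have hodd : HasSum (fun k ↦ a (2 * k + 1) * v ^ (2 * k + 1)) 0 := by
    simp [a, hasSum_zero]
  simpa only [add_zero] using heven.even_add_odd (f := fun k ↦ a k * v ^ k) hodd

end PowerSeries

/-- Completely monotone functions on a set, defined through derivatives within the set so that
closed intervals are covered; meaningful only for sets with unique derivatives. -/
structure CompletelyMonotoneOn (f : ℝ → ℝ) (s : Set ℝ) : Prop where
  contDiffOn : ContDiffOn ℝ ∞ f s
  iteratedDerivWithin_nonneg : ∀ n : ℕ, ∀ t ∈ s, 0 ≤ (-1) ^ n * iteratedDerivWithin n f s t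

/-- Bernstein functions on a set. Smoothness is only required of the derivative, from which that of
the function follows. -/
structure BernsteinOn (f : ℝ → ℝ) (s : Set ℝ) : Prop where
  nonneg : ∀ t ∈ s, 0 ≤ f t
  differentiableOn : DifferentiableOn ℝ f s
  completelyMonotoneOn_derivWithin : CompletelyMonotoneOn (derivWithin f s) s

section Monotone

variable {f g : ℝ → ℝ} {s t : Set ℝ}

theorem CompletelyMonotoneOn.congr (hf : CompletelyMonotoneOn f s) (hfg : EqOn g f s) :
    CompletelyMonotoneOn g s where
  contDiffOn := hf.contDiffOn.congr hfg
  iteratedDerivWithin_nonneg n x hx := by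
    rw [iteratedDerivWithin_congr hfg hx]
    exact hf.iteratedDerivWithin_nonneg n x hx

theorem CompletelyMonotoneOn.of_neg_derivWithin (hs : UniqueDiffOn ℝ s)
    (hf₀ : ∀ x ∈ s, 0 ≤ f x) (hf : DifferentiableOn ℝ f s)
    (hf' : CompletelyMonotoneOn (-derivWithin f s) s) : CompletelyMonotoneOn f s where
  contDiffOn := (contDiffOn_infty_iff_derivWithin hs).2 ⟨hf, by simpa using hf'.contDiffOn.neg⟩
  iteratedDerivWithin_nonneg n x hx := by
    cases n with
    | zero => simpa using hf₀ x hx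
    | succ n =>
      rw [iteratedDerivWithin_succ']
      simpa [pow_succ, iteratedDerivWithin_neg] using hf'.iteratedDerivWithin_nonneg n x hx

theorem CompletelyMonotoneOn.absolutelyMonotoneOn_comp (hf : CompletelyMonotoneOn f s)
    (hg : AbsolutelyMonotoneOn g t) (ht : UniqueDiffOn ℝ t) (hs : UniqueDiffOn ℝ s)
    (hst : MapsTo f s t) : CompletelyMonotoneOn (g ∘ f) s where
  contDiffOn := hg.contDiffOn.comp hf.contDiffOn hst
  iteratedDerivWithin_nonneg n x hx := by
    rw [iteratedDerivWithin_comp_eq_sum_orderedFinpartition (hg.contDiffOn _ (hst hx))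
      (hf.contDiffOn x hx) ht hs hx hst (mod_cast le_top), Finset.mul_sum]
    refine Finset.sum_nonneg fun c _ ↦ ?_
    have hsign : ∏ j, (-1 : ℝ) ^ c.partSize j = (-1) ^ n := by
      simpa using c.prod_sigma_eq_prod fun _ ↦ (-1 : ℝ)
    rw [mul_left_comm, ← hsign, ← Finset.prod_mul_distrib]
    exact mul_nonneg (hg.iteratedDerivWithin_nonneg ht _ (hst hx))
      (Finset.prod_nonneg fun j _ ↦ hf.iteratedDerivWithin_nonneg _ x hx)

theorem BernsteinOn.contDiffOn (hf : BernsteinOn f s) (hs : UniqueDiffOn ℝ s) :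
    ContDiffOn ℝ ∞ f s :=
  (contDiffOn_infty_iff_derivWithin hs).2
    ⟨hf.differentiableOn, hf.completelyMonotoneOn_derivWithin.contDiffOn⟩

theorem BernsteinOn.iteratedDeriv_deriv_nonneg (hf : BernsteinOn f s) (hs : IsOpen s) (n : ℕ)
    {x : ℝ} (hx : x ∈ s) : 0 ≤ (-1) ^ n * iteratedDeriv n (deriv f) x := by
  have h := hf.completelyMonotoneOn_derivWithin.iteratedDerivWithin_nonneg n x hx
  rwa [← iteratedDerivWithin_succ', iteratedDerivWithin_of_isOpen hs hx,
    iteratedDeriv_succ'] at h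

end Monotone

theorem iteratedDeriv_const_add_inv (c : ℝ) (n : ℕ) (t : ℝ) :
    iteratedDeriv n (fun t ↦ (c + t)⁻¹) t = (-1) ^ n * (n.factorial * ((c + t) ^ (n + 1))⁻¹) := by
  have hexp : (-1 - n : ℤ) = -((n + 1 : ℕ) : ℤ) := by push_cast; ring
  rw [iteratedDeriv_comp_const_add n (·⁻¹) c, iteratedDeriv_eq_iterate]
  exact (iter_deriv_inv n (c + t)).trans (by rw [hexp, zpow_neg, zpow_natCast, mul_assoc])

section LogarithmicMean

variable {x y : ℝ}

theorem completelyMonotoneOn_inv_sub_inv (hyx : y ≤ x) :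
    CompletelyMonotoneOn (fun t ↦ (y + t)⁻¹ - (x + t)⁻¹) (Ioi (-y)) := by
  have hsmooth : ∀ c, y ≤ c → ContDiffOn ℝ ∞ (fun t ↦ (c + t)⁻¹) (Ioi (-y)) := fun c hc ↦
    (contDiffOn_const.add contDiffOn_id).inv fun t (ht : -y < t) ↦
      (show 0 < c + t by linarith).ne'
  refine ⟨(hsmooth y le_rfl).sub (hsmooth x hyx), fun n t (ht : -y < t) ↦ ?_⟩
  have hsmoothAt : ∀ c, y ≤ c → ContDiffAt ℝ n (fun t ↦ (c + t)⁻¹) t := fun c hc ↦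
    ((hsmooth c hc).contDiffAt (Ioi_mem_nhds ht)).of_le (mod_cast le_top)
  have hyt : 0 < y + t := by linarith
  have hinv : ((x + t) ^ (n + 1))⁻¹ ≤ ((y + t) ^ (n + 1))⁻¹ := by gcongr
  have hsub : iteratedDeriv n (fun t ↦ (y + t)⁻¹ - (x + t)⁻¹) t =
      (-1) ^ n * (n.factorial * (((y + t) ^ (n + 1))⁻¹ - ((x + t) ^ (n + 1))⁻¹)) := by
    rw [mul_sub, mul_sub, ← iteratedDeriv_const_add_inv, ← iteratedDeriv_const_add_inv]
    exact iteratedDeriv_sub (hsmoothAt y le_rfl) (hsmoothAt x hyx)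
  rw [iteratedDerivWithin_of_isOpen isOpen_Ioi ht, hsub, ← mul_assoc, ← mul_pow, neg_one_mul,
    neg_neg, one_pow, one_mul]
  exact mul_nonneg (Nat.cast_nonneg _) (sub_nonneg.2 hinv)

theorem hasDerivAt_log_const_add {c t : ℝ} (h : c + t ≠ 0) :
    HasDerivAt (fun t ↦ log (c + t)) (c + t)⁻¹ t := by
  simpa using ((hasDerivAt_id t).const_add c).log h

theorem completelyMonotoneOn_log_sub_log (hyx : y ≤ x) :
    CompletelyMonotoneOn (fun t ↦ log (x + t) - log (y + t)) (Ioi (-y)) := by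
  have hderiv : ∀ t ∈ Ioi (-y), HasDerivAt (fun t ↦ log (x + t) - log (y + t))
      ((x + t)⁻¹ - (y + t)⁻¹) t := fun t (ht : -y < t) ↦
    (hasDerivAt_log_const_add (by linarith)).sub (hasDerivAt_log_const_add (by linarith))
  refine CompletelyMonotoneOn.of_neg_derivWithin isOpen_Ioi.uniqueDiffOn
    (fun t (ht : -y < t) ↦ sub_nonneg.2 (log_le_log (by linarith) (by linarith)))
    (fun t ht ↦ (hderiv t ht).differentiableAt.differentiableWithinAt)
    ((completelyMonotoneOn_inv_sub_inv hyx).congr fun t ht ↦ ?_)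
  rw [Pi.neg_apply, derivWithin_of_isOpen isOpen_Ioi ht, (hderiv t ht).deriv, neg_sub]

/-- The logarithmic mean `L(a, b)` of two distinct positive reals. On the diagonal it takes the
junk value `0`, not the conventional value `a`. -/
noncomputable def logMean (a b : ℝ) : ℝ :=
  (a - b) / (log a - log b)

theorem logMean_comm (a b : ℝ) : logMean a b = logMean b a := by
  rw [logMean, logMean, ← neg_div_neg_eq, neg_sub, neg_sub]

theorem logMean_nonneg {a b : ℝ} (ha : 0 < a) (hb : 0 < b) : 0 ≤ logMean a b := by
  wlog hba : b ≤ a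
  · simpa only [logMean_comm a b] using this hb ha (le_of_not_ge hba)
  · exact div_nonneg (sub_nonneg.2 hba) (sub_nonneg.2 (log_le_log hb hba))

theorem two_mul_cosh_log_sub_log_sub_one {a b : ℝ} (ha : 0 < a) (hb : 0 < b) :
    2 * (cosh (log a - log b) - 1) = (a - b) ^ 2 / (a * b) := by
  rw [← log_div ha.ne' hb.ne', cosh_log (div_pos ha hb)]
  field_simp
  ring

theorem hasDerivAt_logMean_add {t : ℝ} (hxy : x ≠ y) (hx : 0 < x + t) (hy : 0 < y + t) :
    HasDerivAt (fun t ↦ logMean (x + t) (y + t))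
      (2 * (cosh (log (x + t) - log (y + t)) - 1) / (log (x + t) - log (y + t)) ^ 2) t := by
  have hlog : log (x + t) - log (y + t) ≠ 0 :=
    sub_ne_zero.2 fun h ↦ hxy (add_right_cancel (log_injOn_pos hx hy h))
  have hnum : HasDerivAt (fun t ↦ (x + t) - (y + t)) 0 t := by
    simpa using hasDerivAt_const t (x - y)
  have hden := (hasDerivAt_log_const_add hx.ne').sub (hasDerivAt_log_const_add hy.ne')
  refine (hnum.div hden hlog).congr_deriv ?_
  rw [two_mul_cosh_log_sub_log_sub_one hx hy]
  congr 1
  field_simp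
  ring

theorem bernsteinOn_logMean_add (hyx : y < x) :
    BernsteinOn (fun t ↦ logMean (x + t) (y + t)) (Ioi (-y)) := by
  have hy : ∀ t ∈ Ioi (-y), 0 < y + t := fun t (ht : -y < t) ↦ by linarith
  have hx : ∀ t ∈ Ioi (-y), 0 < x + t := fun t ht ↦ by linarith [hy t ht]
  have hderiv := fun t ht ↦ hasDerivAt_logMean_add hyx.ne' (hx t ht) (hy t ht)
  refine ⟨fun t ht ↦ logMean_nonneg (hx t ht) (hy t ht),
    fun t ht ↦ (hderiv t ht).differentiableAt.differentiableWithinAt, ?_⟩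
  have hcomp := (completelyMonotoneOn_log_sub_log hyx.le).absolutelyMonotoneOn_comp
    absolutelyMonotoneOn_two_mul_cosh_sub_one_div_sq
    isOpen_Ioi.uniqueDiffOn isOpen_Ioi.uniqueDiffOn
    fun t ht ↦ sub_pos.2 (log_lt_log (hy t ht) (by linarith))
  refine hcomp.congr fun t ht ↦ ?_
  rw [derivWithin_of_isOpen isOpen_Ioi ht, (hderiv t ht).deriv, Function.comp_apply]

end LogarithmicMean

theorem logarithmic_mean_bernstein_general {x y : ℝ} (hxy : x ≠ y) :
    BernsteinOn (fun t ↦ logMean (x + t) (y + t)) (Ioi (-(min x y))) := by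
  wlog hyx : y < x
  · simpa only [logMean_comm, min_comm] using this hxy.symm (hxy.lt_of_le (not_lt.1 hyx))
  · simpa only [min_eq_right hyx.le] using bernsteinOn_logMean_add hyx

theorem logarithmic_mean_bernstein
    (x y : ℝ) (hx : 0 < x) (hy : 0 < y) (hxy : x ≠ y) :
    (∀ t : ℝ, t ∈ Set.Ioi (-(min x y)) →
        0 ≤ ((x + t) - (y + t)) / (Real.log (x + t) - Real.log (y + t))) ∧
      ContDiffOn ℝ (⊤ : ℕ∞)
        (fun t : ℝ => ((x + t) - (y + t)) / (Real.log (x + t) - Real.log (y + t)))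
        (Set.Ioi (-(min x y))) ∧
      ∀ n : ℕ, ∀ t : ℝ, t ∈ Set.Ioi (-(min x y)) →
        0 ≤ (-1 : ℝ) ^ n *
          iteratedDeriv n
            (deriv (fun t : ℝ =>
              ((x + t) - (y + t)) / (Real.log (x + t) - Real.log (y + t)))) t := by
  have h := logarithmic_mean_bernstein_general hxy
  exact ⟨h.nonneg, h.contDiffOn isOpen_Ioi.uniqueDiffOn,
    fun n _ ht ↦ h.iteratedDeriv_deriv_nonneg isOpen_Ioi n ht⟩
end

section
/- Let x > y > 0. Then the limit as t → ∞ of L_{x,y}(t) − t equals the arithmetic mean A(x,y) = (x+y)/2, where L_{x,y}(t) = (x − y)/(ln(x+t) − ln(y+t)). -/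
open Real Filter

/-! With `s = y + t`, `a = x - y` and `u = a / s`, the quantity in question is
`a / log (1 + u) - s + y = a * (1 / log (1 + u) - 1 / u) + y`. As `t → ∞` we have `u → 0`, and the
expansion `log (1 + u) = u - u ^ 2 / 2 + o(u ^ 2)` makes the bracket tend to `1 / 2`. -/

open scoped Topology

lemma tendsto_log_one_add_div_self :
    Tendsto (fun u : ℝ => log (1 + u) / u) (𝓝[≠] 0) (𝓝 1) := by
  have h : HasDerivAt (fun u : ℝ => log (1 + u)) 1 0 := by
    simpa using ((hasDerivAt_id (0 : ℝ)).const_add 1).log (by simp)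
  simpa [div_eq_inv_mul] using h.tendsto_slope_zero

lemma tendsto_sub_log_one_add_div_sq :
    Tendsto (fun u : ℝ => (u - log (1 + u)) / u ^ 2) (𝓝[≠] 0) (𝓝 (1 / 2)) := by
  have one_add_ne : ∀ᶠ u : ℝ in 𝓝[≠] 0, 1 + u ≠ 0 :=
    (ContinuousAt.eventually_ne (by fun_prop) (by simp)).filter_mono nhdsWithin_le_nhds
  have numerator_tendsto : Tendsto (fun u : ℝ => u - log (1 + u)) (𝓝[≠] 0) (𝓝 0) := by
    have h : ContinuousAt (fun u : ℝ => u - log (1 + u)) 0 := by fun_prop (disch := norm_num)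
    simpa using h.tendsto.mono_left nhdsWithin_le_nhds
  have denominator_tendsto : Tendsto (fun u : ℝ => u ^ 2) (𝓝[≠] 0) (𝓝 0) := by
    have h : ContinuousAt (fun u : ℝ => u ^ 2) 0 := by fun_prop
    simpa using h.tendsto.mono_left nhdsWithin_le_nhds
  have deriv_ratio_tendsto :
      Tendsto (fun u : ℝ => (1 - 1 / (1 + u)) / (2 * u)) (𝓝[≠] 0) (𝓝 (1 / 2)) := by
    have h : ContinuousAt (fun u : ℝ => 1 / (2 * (1 + u))) 0 := by fun_prop (disch := norm_num)
    have reduced : Tendsto (fun u : ℝ => 1 / (2 * (1 + u))) (𝓝[≠] 0) (𝓝 (1 / 2)) := by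
      simpa using h.tendsto.mono_left nhdsWithin_le_nhds
    refine reduced.congr' ?_
    filter_upwards [one_add_ne, self_mem_nhdsWithin] with u hu (hu0 : u ≠ 0)
    field_simp
    ring
  refine HasDerivAt.lhopital_zero_nhdsNE ?_ ?_ ?_ numerator_tendsto denominator_tendsto
    deriv_ratio_tendsto
  · filter_upwards [one_add_ne] with u hu
    exact (hasDerivAt_id u).sub (((hasDerivAt_id u).const_add 1).log hu)
  · exact .of_forall fun u => by simpa using hasDerivAt_pow 2 u
  · filter_upwards [self_mem_nhdsWithin] with u hu using mul_ne_zero two_ne_zero hu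

lemma tendsto_inv_log_one_add_sub_inv :
    Tendsto (fun u : ℝ => (log (1 + u))⁻¹ - u⁻¹) (𝓝[≠] 0) (𝓝 (1 / 2)) := by
  have h := tendsto_sub_log_one_add_div_sq.div tendsto_log_one_add_div_self one_ne_zero
  rw [div_one] at h
  refine h.congr' ?_
  filter_upwards [tendsto_log_one_add_div_self.eventually_ne one_ne_zero] with u hu
  obtain ⟨hlog, hu0⟩ := div_ne_zero_iff.mp hu
  simp only [Pi.div_apply]
  field_simp

lemma tendsto_const_div_atTop_nhdsNE_zero {𝕜 : Type*} [Field 𝕜] [LinearOrder 𝕜]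
    [IsStrictOrderedRing 𝕜] [TopologicalSpace 𝕜] [OrderTopology 𝕜] {a : 𝕜} (ha : a ≠ 0) :
    Tendsto (fun s : 𝕜 => a / s) atTop (𝓝[≠] 0) := by
  refine tendsto_nhdsWithin_iff.mpr ⟨tendsto_const_nhds.div_atTop tendsto_id, ?_⟩
  filter_upwards [eventually_ne_atTop 0] with s hs using div_ne_zero ha hs

lemma tendsto_div_log_one_add_div_sub_atTop {a : ℝ} (ha : a ≠ 0) :
    Tendsto (fun s : ℝ => a / log (1 + a / s) - s) atTop (𝓝 (a / 2)) := by
  have h := (tendsto_inv_log_one_add_sub_inv.comp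
    (tendsto_const_div_atTop_nhdsNE_zero ha)).const_mul a
  rw [mul_one_div] at h
  refine h.congr fun s => ?_
  simp only [Function.comp_apply, inv_div, mul_sub, mul_div_cancel₀ s ha, ← div_eq_mul_inv]

theorem logarithmic_mean_limit_general {x y : ℝ} (hxy : x ≠ y) :
    Tendsto (fun t : ℝ => (x - y) / (log (x + t) - log (y + t)) - t)
      atTop (𝓝 ((x + y) / 2)) := by
  have shift : Tendsto (fun t : ℝ => y + t) atTop atTop :=
    tendsto_atTop_add_const_left _ y tendsto_id
  have h := ((tendsto_div_log_one_add_div_sub_atTop (sub_ne_zero.mpr hxy)).comp shift).add_const y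
  rw [show (x - y) / 2 + y = (x + y) / 2 by ring] at h
  refine h.congr' ?_
  filter_upwards [eventually_gt_atTop (-x), eventually_gt_atTop (-y)] with t hx hy
  have hxt : x + t ≠ 0 := by linarith
  have hyt : y + t ≠ 0 := by linarith
  have ratio : 1 + (x - y) / (y + t) = (x + t) / (y + t) := by
    field_simp
    ring
  simp only [Function.comp_apply, ratio, log_div hxt hyt]
  ring

theorem logarithmic_mean_limit
    (x y : ℝ) (hxy : x > y) (hy : 0 < y) :
    Tendsto (fun t : ℝ => (x - y) / (Real.log (x + t) - Real.log (y + t)) - t)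
      atTop (nhds ((x + y) / 2)) :=
  logarithmic_mean_limit_general hxy.ne'
end

section
/- Let x > y > 0. Then the difference between the arithmetic and logarithmic means satisfies A(x,y) − L(x,y) = ((x−y)/π) · ∫₀^∞ (P_{x,y}(s)/s) · e^{−sy} ds, where A(x,y) = (x+y)/2, L(x,y) = (x−y)/(ln x − ln y), P_{x,y}(s) = ∫₀¹ sin(λπ) · F(λ, (x−y)s) dλ, and F(λ,s) = ∫₀¹ (1/u − 1)^λ (1 − λ/(1−u)) e^{−us} du. -/
open Real MeasureTheory

/-- The function `F(λ, s)` from the paper. -/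
noncomputable def paperF (lam s : ℝ) : ℝ :=
  ∫ u in (0 : ℝ)..1, (1 / u - 1) ^ lam * (1 - lam / (1 - u)) * Real.exp (-u * s)

/-- The function `P_{x,y}(s)` from the paper. -/
noncomputable def paperP (x y s : ℝ) : ℝ :=
  ∫ lam in (0 : ℝ)..1, Real.sin (lam * π) * paperF lam ((x - y) * s)

/-!
Integrated over `λ ∈ [0, 1]`, the weighted arithmetic mean `λ x + (1 - λ) y` gives `A(x, y)` and
the weighted geometric mean `x ^ λ * y ^ (1 - λ)` gives `L(x, y)`. Their difference is a beta-type
integral: writing `H u = u ^ (1 - λ) * (1 - u) ^ λ` and `D u = (1 - u) y + u x`, partial fractions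
reduce `H / D` to three beta integrands, one of them over `D`, whence
`∫₀¹ H / D = π / sin (λ π) * (λ x + (1 - λ) y - x ^ λ * y ^ (1 - λ)) / (x - y) ^ 2`.
On the other side, the factor `(1 / u - 1) ^ λ * (1 - λ / (1 - u))` in `F` is `H'`, so an
integration by parts gives `F(λ, s) = s ∫₀¹ H u * exp (-u s)`. The `1 / s` in the representation
cancels the factor `s`, and `∫₀^∞ exp (-D s) ds = 1 / D` joins the two computations.
-/

open Set ProbabilityTheory

lemma min_le_convexComb {x y u : ℝ} (hu : u ∈ Icc (0 : ℝ) 1) :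
    min x y ≤ (1 - u) * y + u * x :=
  (convex_Ici (min x y)) (min_le_right x y) (min_le_left x y) (sub_nonneg.2 hu.2) hu.1
    (sub_add_cancel 1 u)

lemma convexComb_pos {x y u : ℝ} (hx : 0 < x) (hy : 0 < y) (hu : u ∈ Icc (0 : ℝ) 1) :
    0 < (1 - u) * y + u * x :=
  (lt_min hx hy).trans_le (min_le_convexComb hu)

section LogarithmicMean

variable {x y : ℝ}

lemma integral_rpow_mul_rpow_one_sub (hx : 0 < x) (hy : 0 < y) (hxy : x ≠ y) :
    ∫ lam in (0 : ℝ)..1, x ^ lam * y ^ (1 - lam) = (x - y) / (log x - log y) := by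
  have hlog : log x - log y ≠ 0 := sub_ne_zero.2 fun h => hxy (log_injOn_pos hx hy h)
  have hexp : ∀ lam : ℝ, x ^ lam * y ^ (1 - lam) = y * exp (lam * (log x - log y)) := fun lam => by
    rw [rpow_def_of_pos hx, rpow_def_of_pos hy, ← exp_add]
    nth_rw 2 [← exp_log hy]
    rw [← exp_add]
    ring_nf
  simp only [hexp, intervalIntegral.integral_const_mul]
  rw [intervalIntegral.integral_comp_mul_right _ hlog, zero_mul, one_mul, integral_exp, exp_zero,
    exp_sub, exp_log hx, exp_log hy, smul_eq_mul]
  field_simp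

lemma integral_weighted_arithMean_sub_geomMean (hx : 0 < x) (hy : 0 < y) (hxy : x ≠ y) :
    ∫ lam in (0 : ℝ)..1, (lam * x + (1 - lam) * y - x ^ lam * y ^ (1 - lam)) =
      (x + y) / 2 - (x - y) / (log x - log y) := by
  have hgeom : Continuous fun lam : ℝ => x ^ lam * y ^ (1 - lam) :=
    (continuous_const_rpow hx.ne').mul
      ((continuous_const_rpow hy.ne').comp (continuous_const.sub continuous_id))
  have harith : ∫ lam in (0 : ℝ)..1, (lam * x + (1 - lam) * y) = (x + y) / 2 := by
    have h : ∀ lam : ℝ, lam * x + (1 - lam) * y = y + lam * (x - y) := fun lam => by ring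
    simp only [h]
    rw [intervalIntegral.integral_add (by simp) (Continuous.intervalIntegrable (by fun_prop) _ _),
      intervalIntegral.integral_mul_const, integral_id, intervalIntegral.integral_const,
      smul_eq_mul]
    ring
  rw [intervalIntegral.integral_sub (Continuous.intervalIntegrable (by fun_prop) _ _)
    (hgeom.intervalIntegrable _ _), harith, integral_rpow_mul_rpow_one_sub hx hy hxy]

end LogarithmicMean

/-- The integrand `u ^ (p - 1) * (1 - u) ^ (q - 1)` of Euler's beta integral over `[0, 1]`.
The unshifted product `u ^ p * (1 - u) ^ q` is written `betaKernel (p + 1) (q + 1) u`, so that all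
products occurring below are instances of one function. -/
noncomputable def betaKernel (p q u : ℝ) : ℝ :=
  u ^ (p - 1) * (1 - u) ^ (q - 1)

section BetaKernel

variable {p q u : ℝ}

lemma betaKernel_add_one_left (hu : u ≠ 0) : betaKernel (p + 1) q u = u * betaKernel p q u := by
  rw [betaKernel, betaKernel, add_sub_right_comm, rpow_add_one hu]
  ring

lemma betaKernel_add_one_right (hu : u ≠ 1) :
    betaKernel p (q + 1) u = (1 - u) * betaKernel p q u := by
  rw [betaKernel, betaKernel, add_sub_right_comm, rpow_add_one (sub_ne_zero.2 hu.symm)]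
  ring

lemma betaKernel_add_one_add_one (p q u : ℝ) :
    betaKernel (p + 1) (q + 1) u = u ^ p * (1 - u) ^ q := by
  rw [betaKernel, add_sub_cancel_right, add_sub_cancel_right]

lemma betaKernel_add_one_mem_Icc (hp : 0 ≤ p) (hq : 0 ≤ q) (hu : u ∈ Icc (0 : ℝ) 1) :
    betaKernel (p + 1) (q + 1) u ∈ Icc (0 : ℝ) 1 := by
  have hu' : 0 ≤ 1 - u := sub_nonneg.2 hu.2
  rw [betaKernel_add_one_add_one]
  exact ⟨mul_nonneg (rpow_nonneg hu.1 p) (rpow_nonneg hu' q),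
    mul_le_one₀ (rpow_le_one hu.1 hu.2 hp) (rpow_nonneg hu' q)
      (rpow_le_one hu' (sub_le_self 1 hu.1) hq)⟩

lemma continuous_betaKernel_add_one (hp : 0 ≤ p) (hq : 0 ≤ q) :
    Continuous (betaKernel (p + 1) (q + 1)) := by
  simp only [funext (betaKernel_add_one_add_one p q)]
  exact (continuous_rpow_const hp).mul ((continuous_rpow_const hq).comp (by fun_prop))

lemma ofReal_betaKernel (p q : ℝ) (hu : u ∈ Icc (0 : ℝ) 1) :
    (betaKernel p q u : ℂ) = (u : ℂ) ^ ((p : ℂ) - 1) * (1 - (u : ℂ)) ^ ((q : ℂ) - 1) := by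
  rw [betaKernel, Complex.ofReal_mul, Complex.ofReal_cpow hu.1,
    Complex.ofReal_cpow (sub_nonneg.2 hu.2)]
  push_cast
  rfl

lemma intervalIntegrable_betaKernel (hp : 0 < p) (hq : 0 < q) :
    IntervalIntegrable (betaKernel p q) volume 0 1 := by
  have hbeta := Complex.betaIntegral_convergent (u := (p : ℂ)) (v := (q : ℂ)) (by simpa) (by simpa)
  have hcongr := hbeta.congr_uIoo fun u hu =>
    (ofReal_betaKernel p q (by simpa using uIoo_subset_uIcc_self hu)).symm
  exact ⟨hcongr.1.re, hcongr.2.re⟩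

lemma integral_betaKernel (hp : 0 < p) (hq : 0 < q) :
    ∫ u in (0 : ℝ)..1, betaKernel p q u = beta p q := by
  rw [beta_eq_betaIntegralReal p q hp hq, Complex.betaIntegral,
    ← intervalIntegral.integral_congr fun u hu => ofReal_betaKernel p q (by simpa using hu),
    intervalIntegral.integral_ofReal, Complex.ofReal_re]

lemma beta_add_one_left (hp : p ≠ 0) (hpq : p + q ≠ 0) :
    beta (p + 1) q = p / (p + q) * beta p q := by
  rw [beta, beta, add_right_comm, Gamma_add_one hp, Gamma_add_one hpq, mul_assoc,
    mul_div_mul_comm]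

lemma beta_one_sub_self (q : ℝ) : beta (1 - q) q = π / sin (q * π) := by
  rw [beta, sub_add_cancel, Gamma_one, div_one, mul_comm, Gamma_mul_Gamma_one_sub, mul_comm π]

/-- Feynman parametrization, by the substitution `v = u x / ((1 - u) y + u x)`. -/
lemma integral_betaKernel_div_convexComb_rpow {x y : ℝ} (hx : 0 < x) (hy : 0 < y) (p q : ℝ) :
    ∫ u in (0 : ℝ)..1, betaKernel p q u / ((1 - u) * y + u * x) ^ (p + q) =
      (∫ u in (0 : ℝ)..1, betaKernel p q u) / (x ^ p * y ^ q) := by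
  set D : ℝ → ℝ := fun u => (1 - u) * y + u * x
  have hD : ∀ u ∈ Icc (0 : ℝ) 1, 0 < D u := fun u hu => convexComb_pos hx hy hu
  have hderiv : ∀ u ∈ Icc (0 : ℝ) 1,
      HasDerivAt (fun u => u * x / D u) (x * y / D u ^ 2) u := fun u hu => by
    have hD' : HasDerivAt D (x - y) u :=
      ((((hasDerivAt_id u).const_sub 1).mul_const y).add
        ((hasDerivAt_id u).mul_const x)).congr_deriv (by ring)
    exact (((hasDerivAt_id u).mul_const x).div hD' (hD u hu).ne').congr_deriv (by
      simp only [D, id]; ring)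
  have hsubst := intervalIntegral.integral_deriv_smul_comp_of_deriv_nonneg
    (a := 0) (b := 1) (g := betaKernel p q) (f := fun u => u * x / D u)
    (f' := fun u => x * y / D u ^ 2)
    (fun u hu => (hderiv u (by simpa using hu)).continuousAt.continuousWithinAt)
    (fun u hu => hderiv u (Ioo_subset_Icc_self (by simpa using hu)))
    (fun u _ => by positivity)
  have hpullback : ∀ u ∈ Icc (0 : ℝ) 1, x * y / D u ^ 2 * betaKernel p q (u * x / D u) =
      x ^ p * y ^ q * (betaKernel p q u / D u ^ (p + q)) := fun u hu => by
    have hDu := hD u hu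
    have hcompl : 1 - u * x / D u = (1 - u) * y / D u := by
      rw [eq_div_iff hDu.ne', sub_mul, div_mul_cancel₀ _ hDu.ne']
      simp only [D]; ring
    rw [betaKernel, betaKernel, hcompl, div_rpow (mul_nonneg hu.1 hx.le) hDu.le,
      div_rpow (mul_nonneg (sub_nonneg.2 hu.2) hy.le) hDu.le, mul_rpow hu.1 hx.le,
      mul_rpow (sub_nonneg.2 hu.2) hy.le, rpow_sub_one hx.ne', rpow_sub_one hy.ne',
      rpow_sub_one hDu.ne', rpow_sub_one hDu.ne', rpow_add hDu]
    field_simp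
  have hends : (0 : ℝ) * x / D 0 = 0 ∧ (1 : ℝ) * x / D 1 = 1 := by simp [D, hx.ne']
  rw [eq_div_iff (by positivity), mul_comm, ← intervalIntegral.integral_const_mul,
    ← intervalIntegral.integral_congr fun u hu => hpullback u (by simpa using hu)]
  rwa [hends.1, hends.2] at hsubst

lemma hasDerivAt_betaKernel_add_one (p q : ℝ) (hu : u ∈ Ioo (0 : ℝ) 1) :
    HasDerivAt (betaKernel (p + 1) (q + 1))
      (p * betaKernel p (q + 1) u - q * betaKernel (p + 1) q u) u := by
  have hpow := ((hasDerivAt_id u).rpow_const (p := p) (Or.inl hu.1.ne')).mul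
    (((hasDerivAt_id u).const_sub 1).rpow_const (p := q) (Or.inl (sub_pos.2 hu.2).ne'))
  rw [funext (betaKernel_add_one_add_one p q)]
  refine hpow.congr_deriv ?_
  simp only [betaKernel, add_sub_cancel_right, id]
  ring

lemma integral_deriv_betaKernel_mul_exp (hp : 0 < p) (hq : 0 < q) (s : ℝ) :
    ∫ u in (0 : ℝ)..1, (p * betaKernel p (q + 1) u - q * betaKernel (p + 1) q u) * exp (-u * s) =
      s * ∫ u in (0 : ℝ)..1, betaKernel (p + 1) (q + 1) u * exp (-u * s) := by
  have hexp : ∀ u : ℝ, HasDerivAt (fun u => exp (-u * s)) (exp (-u * s) * (-s)) u := fun u => by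
    simpa using ((hasDerivAt_id u).neg.mul_const s).exp
  have hparts := intervalIntegral.integral_mul_deriv_eq_deriv_mul_of_hasDerivAt
    (a := 0) (b := 1) (by fun_prop) (continuous_betaKernel_add_one hp.le hq.le).continuousOn
    (fun u _ => hexp u) (fun u hu => hasDerivAt_betaKernel_add_one p q (by simpa using hu))
    (Continuous.intervalIntegrable (by fun_prop) _ _)
    (((intervalIntegrable_betaKernel hp (by positivity)).const_mul p).sub
      ((intervalIntegrable_betaKernel (by positivity) hq).const_mul q))
  have hboundary : betaKernel (p + 1) (q + 1) 0 = 0 ∧ betaKernel (p + 1) (q + 1) 1 = 0 := by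
    simp [betaKernel_add_one_add_one, zero_rpow hp.ne', zero_rpow hq.ne']
  rw [hboundary.1, hboundary.2, mul_zero, mul_zero, sub_zero, zero_sub,
    ← intervalIntegral.integral_neg] at hparts
  simp only [mul_comm _ (exp _), hparts, ← intervalIntegral.integral_const_mul]
  refine intervalIntegral.integral_congr fun u _ => ?_
  ring

end BetaKernel

section Laplace

variable {α : Type*} [MeasurableSpace α] {κ : Measure α} {g d : α → ℝ} {c : ℝ}

lemma integrable_div_of_ae_le (hg : Integrable g κ) (hd : AEMeasurable d κ) (hc : 0 < c)
    (hcd : ∀ᵐ z ∂κ, c ≤ d z) : Integrable (fun z => g z / d z) κ := by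
  simp only [div_eq_mul_inv]
  refine hg.mul_bdd (c := c⁻¹) hd.inv.aestronglyMeasurable ?_
  filter_upwards [hcd] with z hz
  rw [norm_inv, norm_of_nonneg (hc.le.trans hz)]
  exact inv_anti₀ hc hz

lemma integrable_mul_exp_neg_mul (hg : Integrable g κ) (hd : AEMeasurable d κ)
    (hd0 : ∀ᵐ z ∂κ, 0 ≤ d z) {s : ℝ} (hs : 0 ≤ s) :
    Integrable (fun z => g z * exp (-d z * s)) κ := by
  refine hg.mul_bdd (c := 1) (by fun_prop) ?_
  filter_upwards [hd0] with z hz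
  rw [norm_of_nonneg (exp_pos _).le, exp_le_one_iff]
  exact mul_nonpos_of_nonpos_of_nonneg (neg_nonpos.2 hz) hs

lemma integrable_prod_mul_exp_neg_mul [SFinite κ] (hg : Integrable g κ) (hd : AEMeasurable d κ)
    (hc : 0 < c) (hcd : ∀ᵐ z ∂κ, c ≤ d z) :
    Integrable (fun w : ℝ × α => g w.2 * exp (-d w.2 * w.1))
      ((volume.restrict (Ioi 0)).prod κ) := by
  have hbound : Integrable (fun w : ℝ × α => exp (-c * w.1) * g w.2)
      ((volume.restrict (Ioi 0)).prod κ) :=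
    Integrable.mul_prod (integrableOn_exp_mul_Ioi (neg_lt_zero.2 hc) 0) hg
  refine hbound.mono (hg.aestronglyMeasurable.comp_snd.mul
    (hd.comp_snd.neg.mul measurable_fst.aemeasurable).exp.aestronglyMeasurable) ?_
  filter_upwards [Measure.quasiMeasurePreserving_fst.ae (ae_restrict_mem measurableSet_Ioi),
    Measure.quasiMeasurePreserving_snd.ae hcd] with w hs hw
  rw [norm_mul, norm_mul, mul_comm, norm_of_nonneg (exp_pos _).le, norm_of_nonneg (exp_pos _).le]
  gcongr
  exact (mem_Ioi.1 hs).le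

lemma integral_Ioi_integral_mul_exp_neg_mul [SFinite κ] (hg : Integrable g κ)
    (hd : AEMeasurable d κ) (hc : 0 < c) (hcd : ∀ᵐ z ∂κ, c ≤ d z) :
    ∫ s in Ioi (0 : ℝ), ∫ z, g z * exp (-d z * s) ∂κ = ∫ z, g z / d z ∂κ := by
  rw [integral_integral_swap (integrable_prod_mul_exp_neg_mul hg hd hc hcd)]
  refine integral_congr_ae ?_
  filter_upwards [hcd] with z hz
  rw [integral_const_mul, integral_exp_mul_Ioi (neg_lt_zero.2 (hc.trans_le hz)), mul_zero,
    exp_zero, neg_div_neg_eq, mul_one_div]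

end Laplace

section Representation

variable {x y lam : ℝ}

lemma betaKernel_add_one_div_convexComb (hx : 0 < x) (hy : 0 < y) (hxy : x ≠ y) (p q : ℝ) {u : ℝ}
    (hu : u ∈ Ioo (0 : ℝ) 1) :
    betaKernel (p + 1) (q + 1) u / ((1 - u) * y + u * x) =
      x / (x - y) ^ 2 * betaKernel p q u - 1 / (x - y) * betaKernel (p + 1) q u -
        x * y / (x - y) ^ 2 * (betaKernel p q u / ((1 - u) * y + u * x)) := by
  have hsub : x - y ≠ 0 := sub_ne_zero.2 hxy
  have hD := (convexComb_pos hx hy (Ioo_subset_Icc_self hu)).ne'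
  rw [betaKernel_add_one_right hu.2.ne, betaKernel_add_one_left hu.1.ne']
  field_simp
  ring

lemma integral_betaKernel_one_sub_div_convexComb (hx : 0 < x) (hy : 0 < y)
    (hlam : lam ∈ Ioo (0 : ℝ) 1) :
    ∫ u in (0 : ℝ)..1, betaKernel (1 - lam) lam u / ((1 - u) * y + u * x) =
      π / sin (lam * π) / (x ^ (1 - lam) * y ^ lam) := by
  simpa only [sub_add_cancel, rpow_one, integral_betaKernel (sub_pos.2 hlam.2) hlam.1,
    beta_one_sub_self] using integral_betaKernel_div_convexComb_rpow hx hy (1 - lam) lam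

lemma integral_betaKernel_add_one_div_convexComb (hx : 0 < x) (hy : 0 < y) (hxy : x ≠ y)
    (hlam : lam ∈ Ioo (0 : ℝ) 1) :
    ∫ u in (0 : ℝ)..1, betaKernel (1 - lam + 1) (lam + 1) u / ((1 - u) * y + u * x) =
      π / sin (lam * π) *
        ((lam * x + (1 - lam) * y - x ^ lam * y ^ (1 - lam)) / (x - y) ^ 2) := by
  have hlam' : 0 < 1 - lam := sub_pos.2 hlam.2
  have hsub : x - y ≠ 0 := sub_ne_zero.2 hxy
  have hmoment : ∫ u in (0 : ℝ)..1, betaKernel (1 - lam + 1) lam u =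
      (1 - lam) * (π / sin (lam * π)) := by
    rw [integral_betaKernel (by positivity) hlam.1, beta_add_one_left hlam'.ne' (by simp),
      sub_add_cancel, div_one, beta_one_sub_self]
  have hint := intervalIntegrable_betaKernel hlam' hlam.1
  have hint_left : IntervalIntegrable (betaKernel (1 - lam + 1) lam) volume 0 1 :=
    intervalIntegrable_betaKernel (by positivity) hlam.1
  have hint_div : IntervalIntegrable
      (fun u => betaKernel (1 - lam) lam u / ((1 - u) * y + u * x)) volume 0 1 := by
    simp only [div_eq_mul_inv]
    refine hint.mul_continuousOn (ContinuousOn.inv₀ (by fun_prop) fun u hu => ?_)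
    exact (convexComb_pos hx hy (by simpa using hu)).ne'
  rw [intervalIntegral.integral_congr_uIoo fun u hu =>
      betaKernel_add_one_div_convexComb hx hy hxy (1 - lam) lam (by simpa using hu),
    intervalIntegral.integral_sub ((hint.const_mul _).sub (hint_left.const_mul _))
      (hint_div.const_mul _),
    intervalIntegral.integral_sub (hint.const_mul _) (hint_left.const_mul _)]
  simp only [intervalIntegral.integral_const_mul]
  rw [integral_betaKernel hlam' hlam.1, beta_one_sub_self, hmoment,
    integral_betaKernel_one_sub_div_convexComb hx hy hlam, rpow_sub hx, rpow_sub hy,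
    rpow_one, rpow_one]
  field_simp
  ring

lemma paperF_eq_mul_integral (hlam : lam ∈ Ioo (0 : ℝ) 1) (s : ℝ) :
    paperF lam s =
      s * ∫ u in (0 : ℝ)..1, betaKernel (1 - lam + 1) (lam + 1) u * exp (-u * s) := by
  rw [paperF, ← integral_deriv_betaKernel_mul_exp (sub_pos.2 hlam.2) hlam.1]
  refine intervalIntegral.integral_congr_uIoo fun u hu => ?_
  rw [uIoo_of_le zero_le_one] at hu
  have hu' : 0 < 1 - u := sub_pos.2 hu.2
  have hpow : (1 / u - 1) ^ lam = (1 - u) * betaKernel (1 - lam) lam u := by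
    rw [one_div, ← betaKernel_add_one_right hu.2.ne, betaKernel, add_sub_cancel_right,
      sub_right_comm, sub_self, zero_sub, rpow_neg hu.1.le, ← inv_rpow hu.1.le,
      ← mul_rpow (inv_nonneg.2 hu.1.le) hu'.le, mul_sub, mul_one, inv_mul_cancel₀ hu.1.ne']
  simp only [hpow, betaKernel_add_one_right hu.2.ne, betaKernel_add_one_left hu.1.ne']
  field_simp
  ring

lemma integrableOn_sin_mul_betaKernel :
    IntegrableOn (fun z : ℝ × ℝ => sin (z.1 * π) * betaKernel (1 - z.1 + 1) (z.1 + 1) z.2)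
      (Ioc 0 1 ×ˢ Ioc 0 1) := by
  have hfin : volume (Ioc (0 : ℝ) 1 ×ˢ Ioc (0 : ℝ) 1) ≠ ⊤ := by
    simp [Measure.volume_eq_prod]
  refine Measure.integrableOn_of_bounded (M := 1) hfin
    (by unfold betaKernel; fun_prop) ?_
  filter_upwards [ae_restrict_mem (measurableSet_Ioc.prod measurableSet_Ioc)] with z hz
  have hker := betaKernel_add_one_mem_Icc (sub_nonneg.2 hz.1.2) hz.1.1.le
    (Ioc_subset_Icc_self hz.2)
  rw [norm_mul, norm_of_nonneg hker.1]
  exact mul_le_one₀ (abs_sin_le_one _) hker.1 hker.2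

lemma paperP_div_mul_exp {s : ℝ} (hs : s ≠ 0) :
    paperP x y s / s * exp (-s * y) =
      (x - y) * ∫ lam in (0 : ℝ)..1, ∫ u in (0 : ℝ)..1,
        sin (lam * π) * betaKernel (1 - lam + 1) (lam + 1) u *
          exp (-((1 - u) * y + u * x) * s) := by
  rw [paperP, div_mul_eq_mul_div, ← intervalIntegral.integral_mul_const,
    ← intervalIntegral.integral_div, ← intervalIntegral.integral_const_mul]
  refine intervalIntegral.integral_congr_uIoo fun lam hlam => ?_
  have hexp : ∀ u : ℝ, exp (-((1 - u) * y + u * x) * s) =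
      exp (-u * ((x - y) * s)) * exp (-s * y) := fun u => by
    rw [← exp_add]
    ring_nf
  simp only [paperF_eq_mul_integral (by simpa using hlam), hexp, ← mul_assoc,
    intervalIntegral.integral_mul_const]
  simp only [mul_assoc, intervalIntegral.integral_const_mul]
  field_simp

lemma integral_Ioi_integral_sin_mul_betaKernel_mul_exp (hx : 0 < x) (hy : 0 < y) :
    ∫ s in Ioi (0 : ℝ), ∫ lam in (0 : ℝ)..1, ∫ u in (0 : ℝ)..1,
        sin (lam * π) * betaKernel (1 - lam + 1) (lam + 1) u *
          exp (-((1 - u) * y + u * x) * s) =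
      ∫ lam in (0 : ℝ)..1, ∫ u in (0 : ℝ)..1,
        sin (lam * π) * betaKernel (1 - lam + 1) (lam + 1) u / ((1 - u) * y + u * x) := by
  set d : ℝ × ℝ → ℝ := fun z => (1 - z.2) * y + z.2 * x
  have hd : AEMeasurable d (volume.restrict (Ioc 0 1 ×ˢ Ioc 0 1)) := by fun_prop
  have hmin : 0 < min x y := lt_min hx hy
  have hmin_le : ∀ᵐ z ∂volume.restrict (Ioc (0 : ℝ) 1 ×ˢ Ioc (0 : ℝ) 1), min x y ≤ d z := by
    filter_upwards [ae_restrict_mem (measurableSet_Ioc.prod measurableSet_Ioc)] with z hz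
    exact min_le_convexComb (Ioc_subset_Icc_self hz.2)
  have hg := integrableOn_sin_mul_betaKernel
  have hswap := integral_Ioi_integral_mul_exp_neg_mul hg hd hmin hmin_le
  rw [Measure.volume_eq_prod, setIntegral_prod _ (integrable_div_of_ae_le hg hd hmin hmin_le)]
    at hswap
  simp only [intervalIntegral.integral_of_le zero_le_one]
  rw [← hswap]
  refine setIntegral_congr_fun measurableSet_Ioi fun s hs => ?_
  have hd0 := hmin_le.mono fun z hz => hmin.le.trans hz
  exact (setIntegral_prod _
    (integrable_mul_exp_neg_mul hg hd hd0 (mem_Ioi.1 hs).le)).symm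

end Representation

theorem arithmetic_minus_logarithmic_integral_representation_general
    {x y : ℝ} (hx : 0 < x) (hy : 0 < y) (hxy : x ≠ y) :
    (x + y) / 2 - (x - y) / (log x - log y) =
      (x - y) / π * ∫ s in Ioi (0 : ℝ), paperP x y s / s * exp (-s * y) := by
  have hsub : x - y ≠ 0 := sub_ne_zero.2 hxy
  rw [← integral_weighted_arithMean_sub_geomMean hx hy hxy,
    setIntegral_congr_fun measurableSet_Ioi fun s hs => paperP_div_mul_exp (mem_Ioi.1 hs).ne',
    integral_const_mul, integral_Ioi_integral_sin_mul_betaKernel_mul_exp hx hy, ← mul_assoc,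
    ← intervalIntegral.integral_const_mul]
  refine intervalIntegral.integral_congr_uIoo fun lam hlam => ?_
  rw [uIoo_of_le zero_le_one] at hlam
  have hsin : sin (lam * π) ≠ 0 :=
    (sin_pos_of_pos_of_lt_pi (mul_pos hlam.1 pi_pos) (mul_lt_of_lt_one_left pi_pos hlam.2)).ne'
  simp only [mul_div_assoc, intervalIntegral.integral_const_mul,
    integral_betaKernel_add_one_div_convexComb hx hy hxy hlam]
  field_simp

theorem arithmetic_minus_logarithmic_integral_representation
    (x y : ℝ) (hxy : x > y) (hy : 0 < y) :
    (x + y) / 2 - (x - y) / (Real.log x - Real.log y) =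
      (x - y) / π *
        ∫ s in Set.Ioi (0 : ℝ), paperP x y s / s * Real.exp (-s * y) :=
  arithmetic_minus_logarithmic_integral_representation_general (hy.trans hxy) hy hxy.ne'
end
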